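/- Let 0 < p < 1 and let |χ₀⟩ = (1/√(2−p))|00⟩ + √((1−p)/(2−p))|11⟩. Then the optimal fidelity for the channel requires no local post-processing: F*(ρ(χ₀, Λ_p)) = F(ρ(χ₀, Λ_p)) = 1 − p/2. -/

import Mathlib

open Matrix Complex
open scoped Kronecker ComplexOrder

/-- Index type for two qubits: the product basis of ℂ² ⊗ ℂ². -/
abbrev Q2 := Fin 2 × Fin 2

/-- Kraus operator `M₀` of the amplitude damping channel. -/
noncomputable def M0 (p : ℝ) : Matrix (Fin 2) (Fin 2) ℂ :=
  !![1, 0; 0, (Real.sqrt (1 - p) : ℂ)]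

/-- Kraus operator `M₁` of the amplitude damping channel. -/
noncomputable def M1 (p : ℝ) : Matrix (Fin 2) (Fin 2) ℂ :=
  !![0, (Real.sqrt p : ℂ); 0, 0]

/-- Outer product `|ψ⟩⟨ψ|` of a two-qubit vector. -/
noncomputable def outer (ψ : Q2 → ℂ) : Matrix Q2 Q2 ℂ :=
  Matrix.of fun i j => ψ i * star (ψ j)

/-- The state `ρ(χ, Λ_p)` obtained by applying the amplitude damping channel
with parameter `p` to the second qubit: `Σᵢ (I ⊗ Mᵢ) ρ (I ⊗ Mᵢ)†`. -/
noncomputable def ampDamp (p : ℝ) (ρ : Matrix Q2 Q2 ℂ) : Matrix Q2 Q2 ℂ :=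
  ((1 : Matrix (Fin 2) (Fin 2) ℂ) ⊗ₖ M0 p) * ρ * ((1 : Matrix (Fin 2) (Fin 2) ℂ) ⊗ₖ M0 p)ᴴ +
  ((1 : Matrix (Fin 2) (Fin 2) ℂ) ⊗ₖ M1 p) * ρ * ((1 : Matrix (Fin 2) (Fin 2) ℂ) ⊗ₖ M1 p)ᴴ

/-- The pure state `|χ⟩ = a|00⟩ + b|11⟩`. -/
noncomputable def ketChi (a b : ℝ) : Q2 → ℂ :=
  fun ij => if ij = ((0 : Fin 2), (0 : Fin 2)) then (a : ℂ)
    else if ij = ((1 : Fin 2), (1 : Fin 2)) then (b : ℂ) else 0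

/-- The maximally entangled state `|Φ⁺⟩ = (|00⟩ + |11⟩)/√2`. -/
noncomputable def phiPlus : Q2 → ℂ := ketChi (Real.sqrt 2)⁻¹ (Real.sqrt 2)⁻¹

/-- The optimal transmitted state `|χ₀⟩ = (1/√(2−p))|00⟩ + √((1−p)/(2−p))|11⟩`. -/
noncomputable def ketChi0 (p : ℝ) : Q2 → ℂ :=
  ketChi (Real.sqrt (1 / (2 - p))) (Real.sqrt ((1 - p) / (2 - p)))

/-- Reduced density matrix on the first qubit (trace out the second qubit). -/
noncomputable def trSecond (ρ : Matrix Q2 Q2 ℂ) : Matrix (Fin 2) (Fin 2) ℂ :=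
  Matrix.of fun i k => ∑ j : Fin 2, ρ (i, j) (k, j)

/-- Reduced density matrix on the second qubit (trace out the first qubit). -/
noncomputable def trFirst (ρ : Matrix Q2 Q2 ℂ) : Matrix (Fin 2) (Fin 2) ℂ :=
  Matrix.of fun j l => ∑ i : Fin 2, ρ (i, j) (i, l)

/-- A unit vector `ψ ∈ ℂ²⊗ℂ²` is maximally entangled if both reduced density
matrices of `|ψ⟩⟨ψ|` equal `I/2`. -/
def MaxEnt (ψ : Q2 → ℂ) : Prop :=
  (∑ ij : Q2, Complex.normSq (ψ ij)) = 1 ∧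
  trSecond (outer ψ) = (1 / 2 : ℂ) • (1 : Matrix (Fin 2) (Fin 2) ℂ) ∧
  trFirst (outer ψ) = (1 / 2 : ℂ) • (1 : Matrix (Fin 2) (Fin 2) ℂ)

/-- The real expectation value `⟨ψ|ρ|ψ⟩`. -/
noncomputable def expectation (ψ : Q2 → ℂ) (ρ : Matrix Q2 Q2 ℂ) : ℝ :=
  (∑ i : Q2, ∑ j : Q2, star (ψ i) * ρ i j * ψ j).re

/-- Fidelity (fully entangled fraction): `F(ρ) = sup_Ψ ⟨Ψ|ρ|Ψ⟩` over maximally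
entangled unit vectors `Ψ`. -/
noncomputable def Fid (ρ : Matrix Q2 Q2 ℂ) : ℝ :=
  sSup {x : ℝ | ∃ ψ : Q2 → ℂ, MaxEnt ψ ∧ x = expectation ψ ρ}

/-- Partial transposition on the second qubit: `(ρ^Γ)_{(i,j),(k,l)} = ρ_{(i,l),(k,j)}`. -/
def ptrans (ρ : Matrix Q2 Q2 ℂ) : Matrix Q2 Q2 ℂ :=
  Matrix.of fun ij kl => ρ (ij.1, kl.2) (kl.1, ij.2)

/-- The Verstraete–Verschelde maximum achievable fidelity under trace-preserving LOCC,
as the value of the semidefinite program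
`F*(ρ) = sup { 1/2 − Tr(X ρ^Γ) : X Hermitian, 0 ≤ X ≤ I, −I/2 ≤ X^Γ ≤ I/2 }`. -/
noncomputable def FStar (ρ : Matrix Q2 Q2 ℂ) : ℝ :=
  sSup {x : ℝ | ∃ X : Matrix Q2 Q2 ℂ,
    X.IsHermitian ∧ X.PosSemidef ∧ ((1 : Matrix Q2 Q2 ℂ) - X).PosSemidef ∧
    (ptrans X + (1 / 2 : ℂ) • (1 : Matrix Q2 Q2 ℂ)).PosSemidef ∧
    ((1 / 2 : ℂ) • (1 : Matrix Q2 Q2 ℂ) - ptrans X).PosSemidef ∧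
    x = 1 / 2 - ((X * ptrans ρ).trace).re}

/-- The Pauli matrix `σ_y`. -/
noncomputable def sigY : Matrix (Fin 2) (Fin 2) ℂ := !![0, -Complex.I; Complex.I, 0]

/-- The matrix `ρ (σ_y⊗σ_y) ρ̄ (σ_y⊗σ_y)` whose eigenvalues define the concurrence. -/
noncomputable def Rmat (ρ : Matrix Q2 Q2 ℂ) : Matrix Q2 Q2 ℂ :=
  ρ * (sigY ⊗ₖ sigY) * ρ.map (starRingEnd ℂ) * (sigY ⊗ₖ sigY)

/-- `c` is the concurrence of `ρ`: `c = max(0, λ₁ − λ₂ − λ₃ − λ₄)` where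
`λ₁ ≥ λ₂ ≥ λ₃ ≥ λ₄ ≥ 0` are the square roots of the eigenvalues (with multiplicity)
of `ρ (σ_y⊗σ_y) ρ̄ (σ_y⊗σ_y)`. -/
def IsConcurrence (ρ : Matrix Q2 Q2 ℂ) (c : ℝ) : Prop :=
  ∃ lam : Fin 4 → ℝ,
    (∀ i j : Fin 4, i ≤ j → lam j ≤ lam i) ∧
    (∀ i : Fin 4, 0 ≤ lam i) ∧
    (Rmat ρ).charpoly = ∏ i : Fin 4, (Polynomial.X - Polynomial.C ((lam i : ℂ) ^ 2)) ∧
    c = max 0 (lam 0 - lam 1 - lam 2 - lam 3)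

/-- `μ` is an eigenvalue of the matrix `A`. -/
def IsEigenvalue (A : Matrix Q2 Q2 ℂ) (μ : ℂ) : Prop :=
  ∃ v : Q2 → ℂ, v ≠ 0 ∧ A *ᵥ v = μ • v

/-!
For a maximally entangled `ψ` the operator `(|ψ⟩⟨ψ|)^Γ` squares to `I/4`, so `I/2 − (|ψ⟩⟨ψ|)^Γ` is a
projection. It is feasible for the semidefinite program, with objective value `⟨ψ|ρ|ψ⟩`; hence
`⟨Φ⁺|ρ|Φ⁺⟩ ≤ F(ρ) ≤ F*(ρ)` for every state `ρ`, and it remains to bound `F*` by `⟨Φ⁺|ρ|Φ⁺⟩` with a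
dual certificate. On `χ₀` the channel outputs `|χ⟩⟨χ| + b(a − b)|10⟩⟨10|` with `χ = a|00⟩ + b|11⟩`
and `b = (1 − p)a`. The weight of `|10⟩⟨10|` equals `ab − b²`, so after subtracting
`b²(|00⟩ + |11⟩)(⟨00| + ⟨11|)` and adding the same weight on `|01⟩⟨01|`, the partial transpose is a
nonnegative combination of `|00⟩⟨00|` and the projector onto `|01⟩ + |10⟩`.
-/

lemma posSemidef_of_isStarProjection {n 𝕜 : Type*} [Fintype n] [RCLike 𝕜] {P : Matrix n n 𝕜}
    (hP : IsStarProjection P) : P.PosSemidef := by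
  have hPP : Pᴴ * P = P := by
    rw [← star_eq_conjTranspose, hP.isSelfAdjoint.star_eq, hP.isIdempotentElem.eq]
  exact hPP ▸ posSemidef_conjTranspose_mul_self P

lemma trace_mul_nonneg_of_posSemidef {n 𝕜 : Type*} [Fintype n] [RCLike 𝕜] {A B : Matrix n n 𝕜}
    (hA : A.PosSemidef) (hB : B.PosSemidef) : 0 ≤ (A * B).trace := by
  obtain ⟨m, v, rfl⟩ := posSemidef_iff_eq_sum_vecMulVec.mp hB
  rw [Matrix.mul_sum, trace_sum]
  refine Finset.sum_nonneg fun i _ => ?_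
  rw [mul_vecMulVec, trace_vecMulVec, dotProduct_comm]
  exact hA.dotProduct_mulVec_nonneg (v i)

lemma isStarProjection_half_sub {A : Type*} [Ring A] [StarRing A] [Algebra ℂ A] [StarModule ℂ A]
    {S : A} (hS : IsSelfAdjoint S) (hSS : S * S = (1 / 4 : ℂ) • 1) :
    IsStarProjection ((1 / 2 : ℂ) • 1 - S) where
  isIdempotentElem := by
    simp only [IsIdempotentElem, sub_mul, mul_sub, smul_mul_assoc, mul_smul_comm, one_mul, mul_one,
      hSS]
    module
  isSelfAdjoint := by
    refine .sub (.smul ?_ (.one A)) hS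
    simp [isSelfAdjoint_iff]

lemma outer_eq_vecMulVec (ψ : Q2 → ℂ) : outer ψ = vecMulVec ψ (star ψ) := rfl

lemma posSemidef_outer (ψ : Q2 → ℂ) : (outer ψ).PosSemidef :=
  posSemidef_vecMulVec_self_star ψ

lemma trace_outer (ψ : Q2 → ℂ) : (outer ψ).trace = star ψ ⬝ᵥ ψ := by
  rw [outer_eq_vecMulVec, trace_vecMulVec, dotProduct_comm]

lemma trace_outer_mul_outer (ψ φ : Q2 → ℂ) :
    (outer ψ * outer φ).trace = normSq (star ψ ⬝ᵥ φ) := by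
  rw [outer_eq_vecMulVec, outer_eq_vecMulVec, vecMulVec_mul_vecMulVec, trace_vecMulVec,
    dotProduct_smul, dotProduct_comm ψ, star_dotProduct φ ψ, smul_eq_mul, star_def, mul_conj]

lemma outer_smul (c : ℝ) (ψ : Q2 → ℂ) : outer (c • ψ) = c ^ 2 • outer ψ := by
  rw [outer_eq_vecMulVec, star_smul, star_trivial, smul_vecMulVec, vecMulVec_smul, smul_smul,
    ← sq, outer_eq_vecMulVec]

lemma mul_outer_mul_conjTranspose (A : Matrix Q2 Q2 ℂ) (ψ : Q2 → ℂ) :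
    A * outer ψ * Aᴴ = outer (A *ᵥ ψ) := by
  rw [outer_eq_vecMulVec, mul_vecMulVec, vecMulVec_mul, ← star_mulVec, outer_eq_vecMulVec]

lemma isStarProjection_outer {ψ : Q2 → ℂ} (hψ : ∑ i, normSq (ψ i) = 1) :
    IsStarProjection (outer ψ) where
  isIdempotentElem := by
    have hunit : star ψ ⬝ᵥ ψ = 1 := by
      simp only [dotProduct, Pi.star_apply, Complex.star_def, ← normSq_eq_conj_mul_self,
        ← ofReal_sum, hψ, ofReal_one]
    rw [IsIdempotentElem, outer_eq_vecMulVec, vecMulVec_mul_vecMulVec, hunit, one_smul]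
  isSelfAdjoint := (posSemidef_outer ψ).isHermitian

lemma star_ketChi_dotProduct_ketChi (a b c d : ℝ) :
    star (ketChi a b) ⬝ᵥ ketChi c d = (a * c + b * d : ℝ) := by
  simp [dotProduct, Fintype.sum_prod_type, ketChi]

lemma expectation_eq_re_trace (ψ : Q2 → ℂ) (ρ : Matrix Q2 Q2 ℂ) :
    expectation ψ ρ = (outer ψ * ρ).trace.re := by
  rw [trace_mul_comm, outer_eq_vecMulVec, mul_vecMulVec, trace_vecMulVec, dotProduct_comm]
  simp only [expectation, dotProduct, mulVec, Finset.mul_sum, Pi.star_apply, mul_assoc]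

lemma ptrans_ptrans (ρ : Matrix Q2 Q2 ℂ) : ptrans (ptrans ρ) = ρ := rfl

lemma ptrans_one : ptrans 1 = 1 := by
  ext ⟨i, j⟩ ⟨k, l⟩
  simp [ptrans, one_apply, eq_comm]

lemma ptrans_sub (ρ σ : Matrix Q2 Q2 ℂ) : ptrans (ρ - σ) = ptrans ρ - ptrans σ := rfl

lemma ptrans_smul (c : ℂ) (ρ : Matrix Q2 Q2 ℂ) : ptrans (c • ρ) = c • ptrans ρ := rfl

lemma isHermitian_ptrans {ρ : Matrix Q2 Q2 ℂ} (hρ : ρ.IsHermitian) : (ptrans ρ).IsHermitian :=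
  .ext fun _ _ => hρ.apply _ _

lemma trace_mul_ptrans (ρ σ : Matrix Q2 Q2 ℂ) :
    (ρ * ptrans σ).trace = (ptrans ρ * σ).trace := by
  simp only [trace, diag_apply, mul_apply, Fintype.sum_prod_type, Fin.sum_univ_two, ptrans,
    of_apply]
  ring

lemma ptrans_outer_mul_self (ψ : Q2 → ℂ) :
    ptrans (outer ψ) * ptrans (outer ψ) = trSecond (outer ψ) ⊗ₖ (trFirst (outer ψ))ᵀ := by
  ext ⟨i, j⟩ ⟨k, l⟩
  simp only [mul_apply, Fintype.sum_prod_type, Fin.sum_univ_two, ptrans, trSecond, trFirst, outer,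
    of_apply, kroneckerMap_apply, transpose_apply]
  ring

lemma maxEnt_ketChi {a b : ℝ} (ha : a ^ 2 = 1 / 2) (hb : b ^ 2 = 1 / 2) :
    MaxEnt (ketChi a b) := by
  have haC : (a : ℂ) * a = 2⁻¹ := by rw [← ofReal_mul, ← sq, ha]; norm_num
  have hbC : (b : ℂ) * b = 2⁻¹ := by rw [← ofReal_mul, ← sq, hb]; norm_num
  refine ⟨?_, ?_, ?_⟩
  · have hab : a ^ 2 + b ^ 2 = 1 := by linarith
    simpa [Fintype.sum_prod_type, ketChi, ← sq] using hab
  all_goals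
    ext i j
    fin_cases i <;> fin_cases j <;> simp [trSecond, trFirst, outer, ketChi, haC, hbC]

lemma maxEnt_phiPlus : MaxEnt phiPlus := by
  apply maxEnt_ketChi <;> norm_num

/-- The feasible set `0 ≤ X ≤ I`, `−I/2 ≤ X^Γ ≤ I/2` of the semidefinite program that defines
`FStar`. -/
structure IsFeasible (X : Matrix Q2 Q2 ℂ) : Prop where
  nonneg : X.PosSemidef
  le_one : (1 - X).PosSemidef
  neg_half_le_ptrans : (ptrans X + (1 / 2 : ℂ) • 1).PosSemidef
  ptrans_le_half : ((1 / 2 : ℂ) • 1 - ptrans X).PosSemidef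

lemma FStar_eq_sSup_image (ρ : Matrix Q2 Q2 ℂ) :
    FStar ρ = sSup ((fun X => 1 / 2 - (X * ptrans ρ).trace.re) '' {X | IsFeasible X}) := by
  refine congrArg sSup (Set.ext fun x => ⟨?_, ?_⟩)
  · rintro ⟨X, -, h0, h1, hl, hu, rfl⟩
    exact ⟨X, ⟨h0, h1, hl, hu⟩, rfl⟩
  · rintro ⟨X, ⟨h0, h1, hl, hu⟩, rfl⟩
    exact ⟨X, h0.isHermitian, h0, h1, hl, hu, rfl⟩

lemma Fid_eq_sSup_image (ρ : Matrix Q2 Q2 ℂ) :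
    Fid ρ = sSup ((expectation · ρ) '' {ψ | MaxEnt ψ}) := by
  simp only [Fid, Set.image, Set.mem_ofPred_eq, eq_comm]

/-- Weak duality: `C`, `D` and `(ρ + D − C)^Γ` are the multipliers of the constraints
`−I/2 ≤ X^Γ`, `X^Γ ≤ I/2` and `0 ≤ X`. -/
lemma IsFeasible.objective_le {X ρ C D : Matrix Q2 Q2 ℂ} (hX : IsFeasible X)
    (hC : C.PosSemidef) (hD : D.PosSemidef) (hA : (ptrans (ρ + D - C)).PosSemidef) :
    1 / 2 - (X * ptrans ρ).trace.re ≤ (1 + C.trace.re + D.trace.re) / 2 := by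
  have hXA : 0 ≤ (X * ptrans (ρ + D - C)).trace.re :=
    (le_def.mp (trace_mul_nonneg_of_posSemidef hX.nonneg hA)).1
  have hXC : 0 ≤ ((ptrans X + (1 / 2 : ℂ) • 1) * C).trace.re :=
    (le_def.mp (trace_mul_nonneg_of_posSemidef hX.neg_half_le_ptrans hC)).1
  have hXD : 0 ≤ (((1 / 2 : ℂ) • 1 - ptrans X) * D).trace.re :=
    (le_def.mp (trace_mul_nonneg_of_posSemidef hX.ptrans_le_half hD)).1
  rw [trace_mul_ptrans] at hXA ⊢
  have hhalf (ρ : Matrix Q2 Q2 ℂ) : (((1 / 2 : ℂ) • 1 : Matrix Q2 Q2 ℂ) * ρ).trace.re =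
      ρ.trace.re / 2 := by
    simp [div_eq_inv_mul]
  simp only [mul_add, mul_sub, add_mul, sub_mul, trace_add, trace_sub, add_re, sub_re, hhalf]
    at hXA hXC hXD
  linarith

lemma FStar_le {ρ C D : Matrix Q2 Q2 ℂ} (hC : C.PosSemidef) (hD : D.PosSemidef)
    (hA : (ptrans (ρ + D - C)).PosSemidef) : FStar ρ ≤ (1 + C.trace.re + D.trace.re) / 2 := by
  rw [FStar_eq_sSup_image]
  have hCtr : 0 ≤ C.trace.re := (le_def.mp hC.trace_nonneg).1
  have hDtr : 0 ≤ D.trace.re := (le_def.mp hD.trace_nonneg).1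
  exact Real.sSup_le (Set.forall_mem_image.mpr fun X hX => hX.objective_le hC hD hA)
    (by positivity)

lemma bddAbove_objective_image {ρ : Matrix Q2 Q2 ℂ} (hρ : ρ.PosSemidef) :
    BddAbove ((fun X => 1 / 2 - (X * ptrans ρ).trace.re) '' {X | IsFeasible X}) :=
  ⟨_, Set.forall_mem_image.mpr fun X (hX : IsFeasible X) =>
    hX.objective_le hρ .zero (by rw [add_zero, sub_self]; exact .zero)⟩

lemma MaxEnt.isFeasible {ψ : Q2 → ℂ} (hψ : MaxEnt ψ) :
    IsFeasible ((1 / 2 : ℂ) • 1 - ptrans (outer ψ)) := by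
  obtain ⟨hunit, hfst, hsnd⟩ := hψ
  have hproj : IsStarProjection (outer ψ) := isStarProjection_outer hunit
  have hX : IsStarProjection ((1 / 2 : ℂ) • 1 - ptrans (outer ψ)) := by
    refine isStarProjection_half_sub (isHermitian_ptrans (posSemidef_outer ψ).isHermitian) ?_
    rw [ptrans_outer_mul_self, hfst, hsnd, transpose_smul, transpose_one, smul_kronecker,
      kronecker_smul, one_kronecker_one, smul_smul]
    norm_num
  have hXΓ : ptrans ((1 / 2 : ℂ) • 1 - ptrans (outer ψ)) = (1 / 2 : ℂ) • 1 - outer ψ := by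
    rw [ptrans_sub, ptrans_smul, ptrans_one, ptrans_ptrans]
  refine ⟨posSemidef_of_isStarProjection hX, posSemidef_of_isStarProjection hX.one_sub, ?_, ?_⟩
  · have hone : (1 / 2 : ℂ) • 1 - outer ψ + (1 / 2 : ℂ) • 1 = 1 - outer ψ := by
      rw [sub_add_eq_add_sub, ← add_smul]; norm_num
    rw [hXΓ, hone]
    exact posSemidef_of_isStarProjection hproj.one_sub
  · rw [hXΓ, sub_sub_cancel]
    exact posSemidef_outer ψ

lemma expectation_eq_objective (ψ : Q2 → ℂ) {ρ : Matrix Q2 Q2 ℂ} (hρ : ρ.trace = 1) :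
    expectation ψ ρ =
      1 / 2 - (((1 / 2 : ℂ) • 1 - ptrans (outer ψ)) * ptrans ρ).trace.re := by
  rw [trace_mul_ptrans, ptrans_sub, ptrans_smul, ptrans_one, ptrans_ptrans, sub_mul, trace_sub,
    smul_one_mul, trace_smul, hρ, expectation_eq_re_trace]
  simp

lemma expectation_image_subset {ρ : Matrix Q2 Q2 ℂ} (hρ : ρ.trace = 1) :
    (expectation · ρ) '' {ψ | MaxEnt ψ} ⊆
      (fun X => 1 / 2 - (X * ptrans ρ).trace.re) '' {X | IsFeasible X} :=
  Set.image_subset_iff.mpr fun ψ hψ =>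
    ⟨_, MaxEnt.isFeasible hψ, (expectation_eq_objective ψ hρ).symm⟩

lemma expectation_le_Fid {ρ : Matrix Q2 Q2 ℂ} (hρ : ρ.PosSemidef) (htr : ρ.trace = 1)
    {ψ : Q2 → ℂ} (hψ : MaxEnt ψ) : expectation ψ ρ ≤ Fid ρ := by
  rw [Fid_eq_sSup_image]
  exact le_csSup ((bddAbove_objective_image hρ).mono (expectation_image_subset htr))
    (Set.mem_image_of_mem _ hψ)

lemma Fid_le_FStar {ρ : Matrix Q2 Q2 ℂ} (hρ : ρ.PosSemidef) (htr : ρ.trace = 1) :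
    Fid ρ ≤ FStar ρ := by
  rw [Fid_eq_sSup_image, FStar_eq_sSup_image]
  exact csSup_le_csSup (bddAbove_objective_image hρ) ⟨_, phiPlus, maxEnt_phiPlus, rfl⟩
    (expectation_image_subset htr)

/-- The X-state `|χ⟩⟨χ| + b(a − b)|10⟩⟨10|` with `χ = a|00⟩ + b|11⟩`, normalised when
`a(a + b) = 1`. The output of the channel on `χ₀` has this form with `b = (1 − p)a`. -/
noncomputable def dampedState (a b : ℝ) : Matrix Q2 Q2 ℂ :=
  outer (ketChi a b) + (b * (a - b)) • outer (Pi.single (1, 0) 1)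

lemma posSemidef_dampedState {a b : ℝ} (hb : 0 ≤ b) (hba : b ≤ a) :
    (dampedState a b).PosSemidef :=
  (posSemidef_outer _).add ((posSemidef_outer _).smul (mul_nonneg hb (sub_nonneg.mpr hba)))

lemma trace_dampedState (a b : ℝ) : (dampedState a b).trace = (a * (a + b) : ℝ) := by
  rw [dampedState, trace_add, trace_smul, trace_outer, trace_outer, star_ketChi_dotProduct_ketChi]
  simp only [Pi.star_single, star_one, dotProduct_single, Pi.single_eq_same, mul_one, real_smul]
  push_cast
  ring

lemma expectation_phiPlus_dampedState (a b : ℝ) :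
    expectation phiPlus (dampedState a b) = (a + b) ^ 2 / 2 := by
  have hχ : normSq (star phiPlus ⬝ᵥ ketChi a b) = (a + b) ^ 2 / 2 := by
    rw [phiPlus, star_ketChi_dotProduct_ketChi, normSq_ofReal, ← sq, ← mul_add, mul_pow, inv_pow,
      Real.sq_sqrt zero_le_two]
    ring
  have h10 : normSq (star phiPlus ⬝ᵥ Pi.single (1, 0) 1) = 0 := by simp [phiPlus, ketChi]
  rw [expectation_eq_re_trace, dampedState, mul_add, mul_smul_comm, trace_add, trace_smul,
    trace_outer_mul_outer, trace_outer_mul_outer, hχ, h10, ofReal_zero, smul_zero, add_zero,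
    ofReal_re]

lemma ptrans_dampedState_add_sub (a b : ℝ) :
    ptrans (dampedState a b + (b * (a - b)) • outer (Pi.single (0, 1) 1)
        - b ^ 2 • outer (ketChi 1 1)) =
      (a ^ 2 - b ^ 2) • outer (Pi.single (0, 0) 1)
        + (b * (a - b)) • outer (Pi.single (0, 1) 1 + Pi.single (1, 0) 1) := by
  ext ⟨i, j⟩ ⟨k, l⟩
  fin_cases i <;> fin_cases j <;> fin_cases k <;> fin_cases l <;>
    simp [ptrans, dampedState, outer, ketChi] <;> ring

lemma FStar_dampedState_le {a b : ℝ} (hb : 0 ≤ b) (hba : b ≤ a) :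
    FStar (dampedState a b) ≤ (1 + b * (a + b)) / 2 := by
  have hκ : 0 ≤ b * (a - b) := mul_nonneg hb (sub_nonneg.mpr hba)
  have hab : 0 ≤ a ^ 2 - b ^ 2 := sub_nonneg.mpr (pow_le_pow_left₀ hb hba 2)
  refine (FStar_le ((posSemidef_outer (ketChi 1 1)).smul (sq_nonneg b))
    ((posSemidef_outer (Pi.single (0, 1) 1)).smul hκ) ?_).trans_eq ?_
  · rw [ptrans_dampedState_add_sub]
    exact ((posSemidef_outer _).smul hab).add ((posSemidef_outer _).smul hκ)
  · simp only [trace_smul, trace_outer, star_ketChi_dotProduct_ketChi, Pi.star_single, star_one,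
      dotProduct_single, Pi.single_eq_same, mul_one, smul_re, ofReal_re, one_re, smul_eq_mul]
    ring

theorem Fid_and_FStar_dampedState {a b : ℝ} (hb : 0 ≤ b) (hba : b ≤ a)
    (hab : a * (a + b) = 1) :
    Fid (dampedState a b) = (a + b) ^ 2 / 2 ∧ FStar (dampedState a b) = (a + b) ^ 2 / 2 := by
  have hρ : (dampedState a b).PosSemidef := posSemidef_dampedState hb hba
  have htr : (dampedState a b).trace = 1 := by rw [trace_dampedState, hab, ofReal_one]
  have hlow : (a + b) ^ 2 / 2 ≤ Fid (dampedState a b) :=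
    expectation_phiPlus_dampedState a b ▸ expectation_le_Fid hρ htr maxEnt_phiPlus
  have hmid : Fid (dampedState a b) ≤ FStar (dampedState a b) := Fid_le_FStar hρ htr
  have hup : FStar (dampedState a b) ≤ (a + b) ^ 2 / 2 :=
    (FStar_dampedState_le hb hba).trans_eq (by linear_combination -hab / 2)
  exact ⟨(hmid.trans hup).antisymm hlow, hup.antisymm (hlow.trans hmid)⟩

lemma one_kronecker_M0_mulVec_ketChi (p a b : ℝ) :
    ((1 : Matrix (Fin 2) (Fin 2) ℂ) ⊗ₖ M0 p) *ᵥ ketChi a b = ketChi a (√(1 - p) * b) := by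
  ext ⟨i, j⟩
  fin_cases i <;> fin_cases j <;>
    simp [mulVec, dotProduct, Fintype.sum_prod_type, M0, ketChi, one_apply]

lemma one_kronecker_M1_mulVec_ketChi (p a b : ℝ) :
    ((1 : Matrix (Fin 2) (Fin 2) ℂ) ⊗ₖ M1 p) *ᵥ ketChi a b =
      (√p * b) • Pi.single (1, 0) (1 : ℂ) := by
  ext ⟨i, j⟩
  fin_cases i <;> fin_cases j <;>
    simp [mulVec, dotProduct, Fintype.sum_prod_type, M1, ketChi, one_apply]

lemma ampDamp_outer_ketChi {p : ℝ} (hp : 0 ≤ p) (a b : ℝ) :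
    ampDamp p (outer (ketChi a b)) =
      outer (ketChi a (√(1 - p) * b)) + (p * b ^ 2) • outer (Pi.single (1, 0) 1) := by
  rw [ampDamp, mul_outer_mul_conjTranspose, mul_outer_mul_conjTranspose,
    one_kronecker_M0_mulVec_ketChi, one_kronecker_M1_mulVec_ketChi, outer_smul, mul_pow,
    Real.sq_sqrt hp]

lemma ampDamp_outer_ketChi0 {p : ℝ} (hp0 : 0 ≤ p) (hp1 : p ≤ 1) :
    ampDamp p (outer (ketChi0 p)) =
      dampedState √(1 / (2 - p)) ((1 - p) * √(1 / (2 - p))) := by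
  have hq : 0 ≤ 1 - p := sub_nonneg.mpr hp1
  have hb : √((1 - p) / (2 - p)) = √(1 - p) * √(1 / (2 - p)) := by
    rw [← Real.sqrt_mul hq, mul_one_div]
  rw [ketChi0, ampDamp_outer_ketChi hp0, hb, dampedState, ← mul_assoc, Real.mul_self_sqrt hq,
    mul_pow, Real.sq_sqrt hq]
  congr 2
  ring

/-- For `0 < p < 1` and the optimal transmitted state `|χ₀⟩`, the optimal
fidelity requires no local post-processing:
`F*(ρ(χ₀, Λ_p)) = F(ρ(χ₀, Λ_p)) = 1 − p/2`. -/
theorem no_postprocessing_needed (p : ℝ) (hp0 : 0 < p) (hp1 : p < 1) :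
    FStar (ampDamp p (outer (ketChi0 p))) = Fid (ampDamp p (outer (ketChi0 p))) ∧
    Fid (ampDamp p (outer (ketChi0 p))) = 1 - p / 2 := by
  have ha : √(1 / (2 - p)) ^ 2 * (2 - p) = 1 := by
    rw [Real.sq_sqrt (by bound), one_div_mul_cancel (by linarith)]
  obtain ⟨hFid, hFStar⟩ := Fid_and_FStar_dampedState
    (a := √(1 / (2 - p))) (b := (1 - p) * √(1 / (2 - p)))
    (mul_nonneg (by linarith) (Real.sqrt_nonneg _))
    (mul_le_of_le_one_left (Real.sqrt_nonneg _) (by linarith)) (by linear_combination ha)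
  rw [ampDamp_outer_ketChi0 hp0.le hp1.le, hFid, hFStar]
  exact ⟨rfl, by linear_combination (2 - p) / 2 * ha⟩
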